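/- Let n ≥ 2, let Λ be an n-dimensional isotropic subspace of ℂ^{2n+1}, and let x ∈ 𝒫(Λ) be any point. Then the collection ℱ_x = {S admissible : x(S) = g_Λ(S)} is closed under the operations ∩ and ⊔: if S₁, S₂ ∈ ℱ_x then S₁ ∩ S₂ ∈ ℱ_x and S₁ ⊔ S₂ ∈ ℱ_x, where S₁ ⊔ S₂ := {a ∈ S₁ ∪ S₂ : ā ∉ S₁ ∪ S₂}. -/

import Mathlib

/-!
The theorem follows from bisubmodularity of `g_Λ`,
`g(S₁ ∩ S₂) + g(S₁ ⊔ S₂) ≤ g(S₁) + g(S₂)` (`gF_bisubmodular`), together with the modular identity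
`x(S₁ ∩ S₂) + x(S₁ ⊔ S₂) = x(S₁) + x(S₂)` (`xval_modular`): if both inequalities defining `𝒫(Λ)`
are tight at `S₁` and `S₂`, they must be tight at `S₁ ∩ S₂` and `S₁ ⊔ S₂`.

Write `d(S) = dim (Λ ∩ H_S)`, `U = S₁ ∪ S₂`, `T = S₁ ⊔ S₂`, and let `k` be the number of `q` with
both `q` and `q̄` in `U`. After counting barred elements, bisubmodularity reads
`d(S₁) + d(S₂) + k ≤ d(S₁ ∩ S₂) + d(T)`. Since `d(S₁) + d(S₂) ≤ d(S₁ ∩ S₂) + d(U)` by the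
dimension formula, it suffices that `d(U) + k ≤ d(T)` (`finrank_union_add_conflict_le`).
For this let `N = Λ ∩ H_U`, let `A ⊆ U` be the admissible set consisting of `T` and one element of
each conflicting pair, and let `G` be spanned by the basis vectors `e_ā`, `a ∈ A`.

* `N + G` is isotropic, so its dimension is at most `n`; hence
  `d(U) + |T| + k ≤ n + dim (N ∩ G)`.
* `N ∩ G` is orthogonal to `Λ + H_T`; hence
  `dim (Λ + H_T) + dim (N ∩ G) ≤ 2n + 1`, that is, `n + dim (N ∩ G) ≤ |T| + d(T)`.
-/

open scoped BigOperators

/-- Index set for the coordinates of `ℂ^{2n+1}`: `none` is the coordinate `0`,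
`some (q, false)` is the coordinate `q+1 ∈ [n]`, and `some (q, true)` is the barred
coordinate `(q+1)̄ ∈ [n]̄`. -/
abbrev Idx (n : ℕ) := Option (Fin n × Bool)

/-- The nondegenerate symmetric bilinear form
`y·z = 2 y₀ z₀ + Σ_q (y_q z_{q̄} + y_{q̄} z_q)` on `ℂ^{2n+1}`. -/
noncomputable def bform (n : ℕ) (y z : Idx n → ℂ) : ℂ :=
  2 * y none * z none +
    ∑ q : Fin n, (y (some (q, false)) * z (some (q, true)) +
      y (some (q, true)) * z (some (q, false)))

/-- A subspace is isotropic if the bilinear form vanishes identically on it. -/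
def IsIsotropic (n : ℕ) (Λ : Submodule ℂ (Idx n → ℂ)) : Prop :=
  ∀ y ∈ Λ, ∀ z ∈ Λ, bform n y z = 0

/-- `H_S`: the coordinate subspace of vectors whose coordinates indexed by `S` vanish. -/
noncomputable def coordSub (n : ℕ) (S : Set (Idx n)) : Submodule ℂ (Idx n → ℂ) where
  carrier := {v | ∀ i ∈ S, v i = 0}
  add_mem' := by
    intro a b ha hb i hi
    simp only [Pi.add_apply, ha i hi, hb i hi, add_zero]
  zero_mem' := by intro i hi; rfl
  smul_mem' := by
    intro c a ha i hi
    simp only [Pi.smul_apply, ha i hi, smul_zero]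

/-- `rk_Λ(S) = n − dim(Λ ∩ H_S)`. -/
noncomputable def rk (n : ℕ) (Λ : Submodule ℂ (Idx n → ℂ)) (S : Set (Idx n)) : ℕ :=
  n - Module.finrank ℂ ↥(Λ ⊓ coordSub n S)

/-- The set of coordinates in `[n] ∪ [n]̄` corresponding to a finite set of pairs. -/
def finIdx (n : ℕ) (S : Finset (Fin n × Bool)) : Set (Idx n) :=
  (fun p => (some p : Idx n)) '' ↑S

/-- A subset `S ⊆ [n] ∪ [n]̄` is admissible if it contains no pair `{q, q̄}`. -/
def Admissible (n : ℕ) (S : Finset (Fin n × Bool)) : Prop :=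
  ∀ q : Fin n, ¬((q, false) ∈ S ∧ (q, true) ∈ S)

/-- `rk_Λ(S)` for `S ⊆ [n] ∪ [n]̄`. -/
noncomputable def rkF (n : ℕ) (Λ : Submodule ℂ (Idx n → ℂ)) (S : Finset (Fin n × Bool)) : ℕ :=
  rk n Λ (finIdx n S)

/-- `g_Λ(S) = rk_Λ(S) − |S ∩ [n]̄|`. -/
noncomputable def gF (n : ℕ) (Λ : Submodule ℂ (Idx n → ℂ)) (S : Finset (Fin n × Bool)) : ℤ :=
  (rkF n Λ S : ℤ) - ((S.filter fun p => p.2 = true).card : ℤ)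

/-- The delta-matroid `𝒟(Λ)`: maximal admissible subsets of full rank. -/
def deltaMatroid (n : ℕ) (Λ : Submodule ℂ (Idx n → ℂ)) : Set (Finset (Fin n × Bool)) :=
  {S | Admissible n S ∧ S.card = n ∧ rkF n Λ S = n}

/-- `x(S) = Σ_{q ∈ S ∩ [n]} x_q − Σ_{q̄ ∈ S ∩ [n]̄} x_q`. -/
def xval (n : ℕ) (x : Fin n → ℝ) (S : Finset (Fin n × Bool)) : ℝ :=
  ∑ p ∈ S.filter (fun p => p.2 = false), x p.1 -
    ∑ p ∈ S.filter (fun p => p.2 = true), x p.1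

/-- The polytope `𝒫(Λ)` cut out by the inequalities `x(S) ≤ g_Λ(S)` over admissible `S`. -/
def polytopeP (n : ℕ) (Λ : Submodule ℂ (Idx n → ℂ)) : Set (Fin n → ℝ) :=
  {x | ∀ S : Finset (Fin n × Bool), Admissible n S → xval n x S ≤ (gF n Λ S : ℝ)}

/-- `χ(S')`: the 0–1 vector whose `q`-th coordinate is `1` exactly when `q ∈ S' ∩ [n]`. -/
def chi (n : ℕ) (S : Finset (Fin n × Bool)) : Fin n → ℝ :=
  fun q => if (q, false) ∈ S then 1 else 0

/-- `S₁ ⊔ S₂ = {a ∈ S₁ ∪ S₂ : ā ∉ S₁ ∪ S₂}`. -/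
def sqcup (n : ℕ) (S₁ S₂ : Finset (Fin n × Bool)) : Finset (Fin n × Bool) :=
  (S₁ ∪ S₂).filter (fun p => (p.1, !p.2) ∉ S₁ ∪ S₂)

/-! ### The bilinear form and coordinate subspaces -/

/-- The involution `q ↔ q̄` on `[n] ∪ [n]̄`. -/
def bar {n : ℕ} (p : Fin n × Bool) : Fin n × Bool := (p.1, !p.2)

lemma bar_bar {n : ℕ} (p : Fin n × Bool) : bar (bar p) = p := by
  simp [bar]

lemma bar_injective {n : ℕ} : Function.Injective (bar (n := n)) :=
  Function.LeftInverse.injective bar_bar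

lemma bform_eq (n : ℕ) (y z : Idx n → ℂ) :
    bform n y z = 2 * y none * z none + ∑ p : Fin n × Bool, y (some p) * z (some (bar p)) := by
  simp only [bform, bar, Fintype.sum_prod_type, Fintype.sum_bool, Bool.not_true, Bool.not_false]
  congr 1
  exact Finset.sum_congr rfl fun q _ => add_comm _ _

lemma bform_comm (n : ℕ) (y z : Idx n → ℂ) : bform n y z = bform n z y := by
  unfold bform
  congr 1
  · ring
  · exact Finset.sum_congr rfl fun q _ => by ring

lemma bform_eq_zero {n : ℕ} {y z : Idx n → ℂ} (h0 : y none = 0 ∨ z none = 0)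
    (h : ∀ p, y (some p) = 0 ∨ z (some (bar p)) = 0) : bform n y z = 0 := by
  rw [bform_eq, Finset.sum_eq_zero fun p _ => mul_eq_zero.2 (h p)]
  rcases h0 with h0 | h0 <;> simp [h0]

/-- `bform` as a bundled bilinear form. -/
noncomputable def bformBilin (n : ℕ) : LinearMap.BilinForm ℂ (Idx n → ℂ) :=
  LinearMap.mk₂ ℂ (bform n)
    (fun a b c => by
      simp only [bform_eq, Pi.add_apply, add_mul, mul_add, Finset.sum_add_distrib]; ring)
    (fun r a b => by
      simp only [bform_eq, Pi.smul_apply, smul_eq_mul, mul_add, Finset.mul_sum]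
      congr 1
      · ring
      · exact Finset.sum_congr rfl fun q _ => by ring)
    (fun a b c => by
      simp only [bform_eq, Pi.add_apply, mul_add, Finset.sum_add_distrib]; ring)
    (fun r a b => by
      simp only [bform_eq, Pi.smul_apply, smul_eq_mul, mul_add, Finset.mul_sum]
      congr 1
      · ring
      · exact Finset.sum_congr rfl fun q _ => by ring)

lemma bformBilin_apply (n : ℕ) (y z : Idx n → ℂ) : bformBilin n y z = bform n y z := rfl

lemma bformBilin_nondegenerate (n : ℕ) : (bformBilin n).Nondegenerate := by
  have key : ∀ y : Idx n → ℂ, (∀ z, bform n y z = 0) → y = 0 := by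
    intro y h
    funext i
    cases i with
    | none => simpa [bform_eq] using h (Pi.single none 1)
    | some p =>
      have := h (Pi.single (some (bar p)) 1)
      rw [bform_eq, Finset.sum_eq_single p] at this
      · simpa using this
      · intro b _ hb
        have : bar b ≠ bar p := fun h => hb (bar_injective h)
        simp [this]
      · simp
  exact ⟨fun y h => key y h, fun y h => key y fun z => by rw [bform_comm]; exact h z⟩

/-- Mutually orthogonal subspaces have total dimension at most `2n + 1`. -/
lemma finrank_add_le_of_orthogonal {n : ℕ} {X Y : Submodule ℂ (Idx n → ℂ)}
    (h : ∀ x ∈ X, ∀ y ∈ Y, bform n x y = 0) :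
    Module.finrank ℂ X + Module.finrank ℂ Y ≤ 2 * n + 1 := by
  have hle : Y ≤ (bformBilin n).orthogonal X := fun y hy x hx => h x hx y hy
  have h1 := Submodule.finrank_mono hle
  rw [LinearMap.BilinForm.finrank_orthogonal (bformBilin_nondegenerate n)]
    at h1
  have h2 := Submodule.finrank_le X
  have h3 : Module.finrank ℂ (Idx n → ℂ) = 2 * n + 1 := by
    simp [mul_comm]
  omega

lemma finrank_coordSub (n : ℕ) (S : Set (Idx n)) :
    Module.finrank ℂ (coordSub n S) + S.ncard = 2 * n + 1 := by
  classical
  have hker : coordSub n S = LinearMap.ker (LinearMap.funLeft ℂ ℂ (Subtype.val : S → Idx n)) := by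
    ext v
    simp only [LinearMap.mem_ker, funext_iff, Subtype.forall]
    rfl
  have h := LinearMap.finrank_range_add_finrank_ker
    (LinearMap.funLeft ℂ ℂ (Subtype.val : S → Idx n))
  rw [← hker, LinearMap.range_eq_top.2
    (LinearMap.funLeft_surjective_of_injective ℂ ℂ _ Subtype.val_injective), finrank_top,
    Module.finrank_fintype_fun_eq_card, Module.finrank_fintype_fun_eq_card] at h
  have h3 : Fintype.card (Idx n) = 2 * n + 1 := by simp [mul_comm]
  rw [← Nat.card_eq_fintype_card (α := S), Nat.card_coe_set_eq] at h
  omega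

lemma ncard_finIdx (n : ℕ) (S : Finset (Fin n × Bool)) : (finIdx n S).ncard = S.card := by
  rw [finIdx, Set.ncard_image_of_injective _ (Option.some_injective _), Set.ncard_coe_finset]

lemma mem_coordSub_finIdx {n : ℕ} {S : Finset (Fin n × Bool)} {v : Idx n → ℂ} :
    v ∈ coordSub n (finIdx n S) ↔ ∀ p ∈ S, v (some p) = 0 := by
  exact Set.forall_mem_image

lemma mem_coordSub_compl_finIdx {n : ℕ} {S : Finset (Fin n × Bool)} {v : Idx n → ℂ} :
    v ∈ coordSub n (finIdx n S)ᶜ ↔ v none = 0 ∧ ∀ p ∉ S, v (some p) = 0 := by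
  have h : ∀ p, some p ∈ finIdx n S ↔ p ∈ S := fun p =>
    (Option.some_injective _).mem_set_image
  have h0 : none ∉ finIdx n S := by
    rintro ⟨p, _, hp⟩
    exact Option.some_ne_none p hp
  change (∀ i ∈ (finIdx n S)ᶜ, v i = 0) ↔ _
  simp only [Option.forall, Set.mem_compl_iff, h, h0, not_false_eq_true, forall_const]

/-! ### Counting -/

/-- The set of `q` for which both `q` and `q̄` lie in `U`. -/
def conflict {n : ℕ} (U : Finset (Fin n × Bool)) : Finset (Fin n) :=
  Finset.univ.filter fun q => (q, false) ∈ U ∧ (q, true) ∈ U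

/-- An admissible subset of `U` of largest size: of each pair `{q, q̄} ⊆ U` only `q̄` is kept. -/
def core {n : ℕ} (U : Finset (Fin n × Bool)) : Finset (Fin n × Bool) :=
  U.filter fun p => p.2 = true ∨ bar p ∉ U

lemma mem_core {n : ℕ} {U : Finset (Fin n × Bool)} {p : Fin n × Bool} :
    p ∈ core U ↔ p ∈ U ∧ (p.2 = true ∨ bar p ∉ U) :=
  Finset.mem_filter

lemma card_eq_sum {n : ℕ} (S : Finset (Fin n × Bool)) :
    S.card = ∑ q : Fin n, ((if (q, true) ∈ S then 1 else 0) + if (q, false) ∈ S then 1 else 0) := by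
  have : S.card = ∑ p : Fin n × Bool, if p ∈ S then 1 else 0 := by simp
  rw [this, Fintype.sum_prod_type]
  simp only [Fintype.sum_bool]

lemma card_core {n : ℕ} (S₁ S₂ : Finset (Fin n × Bool)) :
    (core (S₁ ∪ S₂)).card = (sqcup n S₁ S₂).card + (conflict (S₁ ∪ S₂)).card := by
  rw [card_eq_sum, card_eq_sum, conflict, Finset.card_filter, ← Finset.sum_add_distrib]
  refine Finset.sum_congr rfl fun q _ => ?_
  generalize hU : S₁ ∪ S₂ = U
  simp only [mem_core, sqcup, hU, bar, Finset.mem_filter]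
  by_cases h1 : (q, false) ∈ U <;> by_cases h2 : (q, true) ∈ U <;> simp [h1, h2]

lemma xval_eq_sum {n : ℕ} (x : Fin n → ℝ) (S : Finset (Fin n × Bool)) :
    xval n x S = ∑ q, ((if (q, false) ∈ S then x q else 0) - if (q, true) ∈ S then x q else 0) := by
  have key : ∀ b : Bool, ∑ p ∈ S.filter (fun p => p.2 = b), x p.1
      = ∑ q, if (q, b) ∈ S then x q else 0 := by
    intro b
    have : S.filter (fun p => p.2 = b)
        = Finset.univ.filter (fun p : Fin n × Bool => p ∈ S ∧ p.2 = b) := by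
      ext p; simp
    rw [this, Finset.sum_filter, Fintype.sum_prod_type]
    refine Finset.sum_congr rfl fun q _ => ?_
    cases b <;> simp
  rw [xval, key, key, Finset.sum_sub_distrib]

lemma xval_modular {n : ℕ} (x : Fin n → ℝ) {S₁ S₂ : Finset (Fin n × Bool)}
    (h₁ : Admissible n S₁) (h₂ : Admissible n S₂) :
    xval n x (S₁ ∩ S₂) + xval n x (sqcup n S₁ S₂) = xval n x S₁ + xval n x S₂ := by
  simp only [xval_eq_sum, ← Finset.sum_add_distrib]
  refine Finset.sum_congr rfl fun q _ => ?_
  have a1 := h₁ q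
  have a2 := h₂ q
  simp only [sqcup, Finset.mem_filter, Finset.mem_union, Finset.mem_inter]
  by_cases b1 : (q, false) ∈ S₁ <;> by_cases b2 : (q, true) ∈ S₁ <;>
    by_cases b3 : (q, false) ∈ S₂ <;> by_cases b4 : (q, true) ∈ S₂ <;>
    simp_all

lemma card_barred_eq_sum {n : ℕ} (S : Finset (Fin n × Bool)) :
    (S.filter fun p => p.2 = true).card = ∑ q : Fin n, if (q, true) ∈ S then 1 else 0 := by
  rw [card_eq_sum]
  simp

/-- A conflicting pair contributes one barred element to `S₁` and `S₂` together, and none to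
`S₁ ∩ S₂` or `S₁ ⊔ S₂`. -/
lemma card_barred {n : ℕ} {S₁ S₂ : Finset (Fin n × Bool)}
    (h₁ : Admissible n S₁) (h₂ : Admissible n S₂) :
    ((S₁ ∩ S₂).filter fun p => p.2 = true).card + ((sqcup n S₁ S₂).filter fun p => p.2 = true).card
      + (conflict (S₁ ∪ S₂)).card
      = (S₁.filter fun p => p.2 = true).card + (S₂.filter fun p => p.2 = true).card := by
  simp only [card_barred_eq_sum, conflict]
  rw [Finset.card_filter]
  simp only [← Finset.sum_add_distrib]
  refine Finset.sum_congr rfl fun q _ => ?_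
  have a1 := h₁ q
  have a2 := h₂ q
  simp only [sqcup, Finset.mem_filter, Finset.mem_union, Finset.mem_inter]
  by_cases b1 : (q, false) ∈ S₁ <;> by_cases b2 : (q, true) ∈ S₁ <;>
    by_cases b3 : (q, false) ∈ S₂ <;> by_cases b4 : (q, true) ∈ S₂ <;>
    simp_all

/-! ### Bisubmodularity -/

/-- Passing from `S₁ ⊔ S₂` to `S₁ ∪ S₂` raises the rank by at least the number of conflicting
pairs. -/
lemma finrank_union_add_conflict_le {n : ℕ} {Λ : Submodule ℂ (Idx n → ℂ)}
    (hiso : IsIsotropic n Λ) (hΛ : Module.finrank ℂ Λ = n) (S₁ S₂ : Finset (Fin n × Bool)) :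
    Module.finrank ℂ ↥(Λ ⊓ coordSub n (finIdx n (S₁ ∪ S₂))) + (conflict (S₁ ∪ S₂)).card
      ≤ Module.finrank ℂ ↥(Λ ⊓ coordSub n (finIdx n (sqcup n S₁ S₂))) := by
  have hcard := card_core S₁ S₂
  have hT : ∀ p, p ∈ sqcup n S₁ S₂ ↔ p ∈ S₁ ∪ S₂ ∧ bar p ∉ S₁ ∪ S₂ := fun p => by
    simp only [sqcup, bar, Finset.mem_filter]
  generalize sqcup n S₁ S₂ = T at *
  generalize S₁ ∪ S₂ = U at *
  set N := Λ ⊓ coordSub n (finIdx n U) with hN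
  set G := coordSub n (finIdx n ((core U).image bar))ᶜ with hG
  -- vectors of `G` vanish at `p` unless `p̄` lies in `core U`
  have hGmem : ∀ g ∈ G, g none = 0 ∧ ∀ p, bar p ∉ core U → g (some p) = 0 := by
    intro g hg
    obtain ⟨h0, h⟩ := mem_coordSub_compl_finIdx.1 hg
    refine ⟨h0, fun p hp => h p fun hmem => hp ?_⟩
    obtain ⟨a, ha, rfl⟩ := Finset.mem_image.1 hmem
    rwa [bar_bar]
  have hNG : ∀ y ∈ N, ∀ g ∈ G, bform n y g = 0 := by
    intro y hy g hg
    refine bform_eq_zero (Or.inr (hGmem g hg).1) fun p => ?_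
    by_cases hp : p ∈ core U
    · exact Or.inl (mem_coordSub_finIdx.1 hy.2 p (Finset.mem_filter.1 hp).1)
    · exact Or.inr ((hGmem g hg).2 _ (by rwa [bar_bar]))
  have hGG : ∀ g ∈ G, ∀ g' ∈ G, bform n g g' = 0 := by
    intro g hg g' hg'
    refine bform_eq_zero (Or.inr (hGmem g' hg').1) fun p => ?_
    by_cases hp : bar p ∈ core U
    · refine Or.inr ((hGmem g' hg').2 _ ?_)
      rw [bar_bar]
      intro hp'
      obtain ⟨q, b⟩ := p
      simp only [mem_core, bar] at hp hp'
      cases b <;> simp_all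
    · exact Or.inl ((hGmem g hg).2 p hp)
  have e1 : Module.finrank ℂ ↥(N ⊔ G) + Module.finrank ℂ ↥(N ⊔ G) ≤ 2 * n + 1 := by
    refine finrank_add_le_of_orthogonal fun a ha b hb => ?_
    obtain ⟨y, hy, g, hg, rfl⟩ := Submodule.mem_sup.1 ha
    obtain ⟨y', hy', g', hg', rfl⟩ := Submodule.mem_sup.1 hb
    rw [← bformBilin_apply]
    simp only [map_add, LinearMap.add_apply, bformBilin_apply]
    rw [hiso y hy.1 y' hy'.1, hNG y hy g' hg', hGG g hg g' hg', bform_comm, hNG y' hy' g hg]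
    simp
  have e2 : Module.finrank ℂ ↥(Λ ⊔ coordSub n (finIdx n T)) + Module.finrank ℂ ↥(N ⊓ G)
      ≤ 2 * n + 1 := by
    refine finrank_add_le_of_orthogonal fun a ha v hv => ?_
    obtain ⟨y, hy, h, hh, rfl⟩ := Submodule.mem_sup.1 ha
    rw [← bformBilin_apply]
    simp only [map_add, LinearMap.add_apply, bformBilin_apply]
    rw [hiso y hy v hv.1.1, zero_add]
    refine bform_eq_zero (Or.inr (hGmem v hv.2).1) fun p => ?_
    by_cases hp : p ∈ T
    · exact Or.inl (mem_coordSub_finIdx.1 hh p hp)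
    · right
      by_cases hpU : p ∈ U
      · exact mem_coordSub_finIdx.1 hv.1.2 _ (by simpa [hT, hpU] using hp)
      · refine (hGmem v hv.2).2 _ ?_
        rw [bar_bar]
        exact fun hc => hpU (Finset.mem_filter.1 hc).1
  have e3 := Submodule.finrank_sup_add_finrank_inf_eq N G
  have e4 := Submodule.finrank_sup_add_finrank_inf_eq Λ (coordSub n (finIdx n T))
  have e5 := finrank_coordSub n (finIdx n T)
  rw [ncard_finIdx] at e5
  have e6 := finrank_coordSub n (finIdx n ((core U).image bar))ᶜ
  rw [← hG] at e6
  have e7 := Set.ncard_add_ncard_compl (finIdx n ((core U).image bar))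
  rw [ncard_finIdx, Finset.card_image_of_injective _ bar_injective] at e7
  have e8 : Nat.card (Idx n) = 2 * n + 1 := by simp [mul_comm]
  omega

lemma gF_bisubmodular {n : ℕ} {Λ : Submodule ℂ (Idx n → ℂ)}
    (hiso : IsIsotropic n Λ) (hΛ : Module.finrank ℂ Λ = n) {S₁ S₂ : Finset (Fin n × Bool)}
    (h₁ : Admissible n S₁) (h₂ : Admissible n S₂) :
    gF n Λ (S₁ ∩ S₂) + gF n Λ (sqcup n S₁ S₂) ≤ gF n Λ S₁ + gF n Λ S₂ := by
  have hk := finrank_union_add_conflict_le hiso hΛ S₁ S₂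
  have hb := card_barred h₁ h₂
  have hle : ∀ S, Module.finrank ℂ ↥(Λ ⊓ coordSub n (finIdx n S)) ≤ n := fun S =>
    (Submodule.finrank_mono inf_le_left).trans hΛ.le
  have hsup : (Λ ⊓ coordSub n (finIdx n S₁)) ⊔ (Λ ⊓ coordSub n (finIdx n S₂))
      ≤ Λ ⊓ coordSub n (finIdx n (S₁ ∩ S₂)) := by
    refine sup_le ?_ ?_ <;> refine fun v hv => ⟨hv.1, mem_coordSub_finIdx.2 fun p hp => ?_⟩
    · exact mem_coordSub_finIdx.1 hv.2 p (Finset.mem_inter.1 hp).1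
    · exact mem_coordSub_finIdx.1 hv.2 p (Finset.mem_inter.1 hp).2
  have hinf : (Λ ⊓ coordSub n (finIdx n S₁)) ⊓ (Λ ⊓ coordSub n (finIdx n S₂))
      ≤ Λ ⊓ coordSub n (finIdx n (S₁ ∪ S₂)) := by
    refine fun v hv => ⟨hv.1.1, mem_coordSub_finIdx.2 fun p hp => ?_⟩
    rcases Finset.mem_union.1 hp with hp | hp
    · exact mem_coordSub_finIdx.1 hv.1.2 p hp
    · exact mem_coordSub_finIdx.1 hv.2.2 p hp
  have e1 := Submodule.finrank_mono hsup
  have e2 := Submodule.finrank_mono hinf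
  have e3 := Submodule.finrank_sup_add_finrank_inf_eq
    (Λ ⊓ coordSub n (finIdx n S₁)) (Λ ⊓ coordSub n (finIdx n S₂))
  have l1 := hle S₁
  have l2 := hle S₂
  have l3 := hle (S₁ ∩ S₂)
  have l4 := hle (sqcup n S₁ S₂)
  simp only [gF, rkF, rk]
  omega

theorem stmt9 (n : ℕ) (hn : 2 ≤ n)
    (Λ : Submodule ℂ (Idx n → ℂ)) (hiso : IsIsotropic n Λ)
    (hΛ : Module.finrank ℂ ↥Λ = n)
    (x : Fin n → ℝ) (hx : x ∈ polytopeP n Λ)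
    (S₁ S₂ : Finset (Fin n × Bool))
    (h₁ : Admissible n S₁ ∧ xval n x S₁ = (gF n Λ S₁ : ℝ))
    (h₂ : Admissible n S₂ ∧ xval n x S₂ = (gF n Λ S₂ : ℝ)) :
    (Admissible n (S₁ ∩ S₂) ∧ xval n x (S₁ ∩ S₂) = (gF n Λ (S₁ ∩ S₂) : ℝ)) ∧
      (Admissible n (sqcup n S₁ S₂) ∧
        xval n x (sqcup n S₁ S₂) = (gF n Λ (sqcup n S₁ S₂) : ℝ)) := by
  obtain ⟨a₁, t₁⟩ := h₁
  obtain ⟨a₂, t₂⟩ := h₂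
  have ai : Admissible n (S₁ ∩ S₂) := fun q hq =>
    a₁ q ⟨(Finset.mem_inter.1 hq.1).1, (Finset.mem_inter.1 hq.2).1⟩
  have as : Admissible n (sqcup n S₁ S₂) := fun q hq =>
    (Finset.mem_filter.1 hq.1).2 (Finset.mem_filter.1 hq.2).1
  have hi := hx _ ai
  have hs := hx _ as
  have hm := xval_modular x a₁ a₂
  have hg : (gF n Λ (S₁ ∩ S₂) : ℝ) + gF n Λ (sqcup n S₁ S₂) ≤ gF n Λ S₁ + gF n Λ S₂ := by
    exact_mod_cast gF_bisubmodular hiso hΛ a₁ a₂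
  exact ⟨⟨ai, by linarith⟩, ⟨as, by linarith⟩⟩
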